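/- There do not exist a 3×2 real matrix L and a 2×3 real matrix R, both with all entries nonnegative, such that L·R = A₃. Consequently the nonnegative rank of A₃ equals 3: any classical realization of the exclusion communication matrix A₃ requires three distinguishable letters. -/

import Mathlib

/-!
The matrix `A₃` has determinant `1/4`, so its ordinary rank is `3`. A factorization `C = L * R`
through inner dimension `k` bounds the rank of `C` by `k`, so already without the sign constraints
no factorization of `A₃` has inner dimension below `3`; the trivial factorization `1 * A₃` attains
`3`.
-/

/-- The exclusion communication matrix `A₃` for a three-letter alphabet:
zero diagonal, off-diagonal entries `1/2`. -/
noncomputable def A3 : Matrix (Fin 3) (Fin 3) ℝ := fun i j => if i = j then 0 else 1 / 2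

/-- `C` admits a nonnegative factorization of inner dimension `k`. -/
def HasNNFactorization {α β : Type*} [Fintype α] [Fintype β]
    (C : Matrix α β ℝ) (k : ℕ) : Prop :=
  ∃ (L : Matrix α (Fin k) ℝ) (R : Matrix (Fin k) β ℝ),
    (∀ i j, 0 ≤ L i j) ∧ (∀ i j, 0 ≤ R i j) ∧ L * R = C

lemma A3_rank : A3.rank = 3 := by
  have hdet : IsUnit A3.det := by
    rw [Matrix.det_fin_three]
    norm_num [A3, Fin.ext_iff]
  have h := Matrix.rank_of_isUnit A3 ((Matrix.isUnit_iff_isUnit_det A3).mpr hdet)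
  simpa using h

/-- The nonnegative rank is at least the ordinary rank. -/
lemma HasNNFactorization.rank_le {α β : Type*} [Fintype α] [Fintype β]
    {C : Matrix α β ℝ} {k : ℕ} (h : HasNNFactorization C k) : C.rank ≤ k := by
  obtain ⟨L, R, -, -, rfl⟩ := h
  simpa using (Matrix.rank_mul_le_left L R).trans L.rank_le_card_width

/-- `A₃` has no nonnegative factorization of inner dimension `2`; its nonnegative
rank equals `3`. -/
theorem stmt12 :
    ¬ HasNNFactorization A3 2 ∧ IsLeast {k : ℕ | HasNNFactorization A3 k} 3 := by
  have lower : ∀ k, HasNNFactorization A3 k → 3 ≤ k := fun k h => A3_rank ▸ h.rank_le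
  refine ⟨fun h => absurd (lower 2 h) (by norm_num), ⟨1, A3, ?_, ?_, one_mul A3⟩, lower⟩
  · intro i j
    rw [Matrix.one_apply]
    split_ifs <;> norm_num
  · intro i j
    unfold A3
    split_ifs <;> norm_num
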